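/- arXiv:math/0009239 — 4 statements merged into one kernel-verified Lean document; each statement's English description precedes it below -/
import Mathlib

section
/- Let L be a maximal subalgebra of Vect_pol(E). Then the Euler vector field ℰ belongs to L if and only if L is graded. -/
/-!
A vector field whose coefficients are homogeneous of degree `d` is an eigenvector of `ad ℰ` for the
eigenvalue `d - 1`, by Euler's identity, so `ad ℰ` is diagonalizable on `Vect_pol(E)`.

If `ℰ ∈ L`, then `L` is stable under `ad ℰ`, and a subspace stable under a diagonalizable operator
is the sum of its intersections with the eigenspaces. Hence `L` is graded.

If `L` is graded, then `ℰ` normalizes `L`, so `L + 𝕜ℰ` is a subalgebra and all its brackets lie in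
`L`. By maximality it is `L`, in which case `ℰ ∈ L`, or all of `Vect_pol(E)`, in which case `L`
contains the derived algebra of `Vect_pol(E)`. The latter contains `ℰ = ½ ∑ [∂_i, x_i² ∂_i]`, so
`ℰ ∈ L` again.
-/

open MvPolynomial

/-- The Lie algebra of polynomial vector fields on `E = 𝕜^n`, realized as the
derivations of the polynomial algebra `𝕜[x_1, …, x_n]`. -/
abbrev Vect (𝕜 : Type*) [Field 𝕜] (n : ℕ) : Type _ :=
  Derivation 𝕜 (MvPolynomial (Fin n) 𝕜) (MvPolynomial (Fin n) 𝕜)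

variable (𝕜 : Type*) [Field 𝕜] (n : ℕ)

/-- The Euler vector field `ℰ = Σ x^j ∂_j`. -/
noncomputable def euler : Vect 𝕜 n :=
  MvPolynomial.mkDerivation 𝕜 fun i => MvPolynomial.X i

/-- `Vect_p(E)`: the eigenspace of `ad(ℰ)` for the eigenvalue `p`, i.e. the vector fields
with homogeneous coefficients of degree `p+1`. -/
noncomputable def VectP (p : ℤ) : Submodule 𝕜 (Vect 𝕜 n) :=
  Module.End.eigenspace (LieAlgebra.ad 𝕜 (Vect 𝕜 n) (euler 𝕜 n)) ((p : 𝕜))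

/-- A Lie subalgebra `L` of `Vect_pol(E)` is graded if `L = ⊕_{p ≥ -1} (L ∩ Vect_p(E))`. -/
def IsGradedSubalg (L : LieSubalgebra 𝕜 (Vect 𝕜 n)) : Prop :=
  L.toSubmodule = ⨆ p ≥ (-1 : ℤ), (L.toSubmodule ⊓ VectP 𝕜 n p)

/-- A Lie subalgebra `L` of `Vect_pol(E)` is maximal if the only subalgebras containing it
are `L` itself and `Vect_pol(E)`. -/
def IsMaxSubalg (L : LieSubalgebra 𝕜 (Vect 𝕜 n)) : Prop :=
  ∀ L' : LieSubalgebra 𝕜 (Vect 𝕜 n), L ≤ L' → L' = L ∨ L' = ⊤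

section Eigenspace

variable {K V ι : Type*} [Field K] [AddCommGroup V] [Module K V]
  {f : Module.End K V} {P : Submodule K V}

theorem mem_of_sum_mem_of_mem_eigenspace (hP : ∀ x ∈ P, f x ∈ P) {μ : ι → K}
    (hμ : Function.Injective μ) {s : Finset ι} {v : ι → V}
    (hv : ∀ i, v i ∈ f.eigenspace (μ i)) (hsum : ∑ i ∈ s, v i ∈ P) : ∀ i ∈ s, v i ∈ P := by
  classical
  simp only [Module.End.mem_eigenspace_iff] at hv
  induction s using Finset.induction_on generalizing v with
  | empty => simp
  | insert a s ha ih =>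
    -- Applying `f - μ a` to the sum kills the term `v a` and rescales the others.
    have hshift : f (∑ i ∈ insert a s, v i) - μ a • ∑ i ∈ insert a s, v i
        = ∑ i ∈ s, (μ i - μ a) • v i := by
      simp only [Finset.sum_insert ha, map_add, map_sum, hv, smul_add, Finset.smul_sum,
        add_sub_add_left_eq_sub, ← Finset.sum_sub_distrib, sub_smul]
    have hrescaled : ∀ i ∈ s, (μ i - μ a) • v i ∈ P :=
      ih (hshift ▸ P.sub_mem (hP _ hsum) (P.smul_mem _ hsum))
        fun i => by rw [map_smul, hv, smul_comm]
    have hs : ∀ i ∈ s, v i ∈ P := fun i hi =>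
      (P.smul_mem_iff (sub_ne_zero.mpr (hμ.ne (ne_of_mem_of_not_mem hi ha)))).mp (hrescaled i hi)
    rw [Finset.sum_insert ha, P.add_mem_iff_left (P.sum_mem hs)] at hsum
    exact (Finset.forall_mem_insert ..).mpr ⟨hsum, hs⟩

theorem inf_iSup_eigenspace (hP : ∀ x ∈ P, f x ∈ P) (μ : ι → K) :
    P ⊓ ⨆ i, f.eigenspace (μ i) = ⨆ i, P ⊓ f.eigenspace (μ i) := by
  refine le_antisymm ?_ (le_inf (iSup_le fun _ => inf_le_left) (iSup_mono fun _ => inf_le_right))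
  rw [← iSup_range' f.eigenspace μ, ← iSup_range' (fun ν => P ⊓ f.eigenspace ν) μ]
  rintro x ⟨hxP, hx⟩
  obtain ⟨v, hv, rfl⟩ := (Submodule.mem_iSup_iff_exists_finsupp _ _).mp hx
  exact Submodule.sum_mem _ fun ν hν => Submodule.mem_iSup_of_mem ν
    ⟨mem_of_sum_mem_of_mem_eigenspace hP Subtype.val_injective hv hxP ν hν, hv ν⟩

end Eigenspace

section Normalizer

variable {R V : Type*} [CommRing R] [LieRing V] [LieAlgebra R V] {H : LieSubalgebra R V} {x : V}

theorem lie_mem_of_mem_span_sup (hx : x ∈ H.normalizer) {y z : V}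
    (hy : y ∈ R ∙ x ⊔ H.toSubmodule) (hz : z ∈ R ∙ x ⊔ H.toSubmodule) : ⁅y, z⁆ ∈ H := by
  obtain ⟨_, hs, a, ha, rfl⟩ := Submodule.mem_sup.mp hy
  obtain ⟨_, ht, b, hb, rfl⟩ := Submodule.mem_sup.mp hz
  obtain ⟨s, rfl⟩ := Submodule.mem_span_singleton.mp hs
  obtain ⟨t, rfl⟩ := Submodule.mem_span_singleton.mp ht
  have hexpand : ⁅s • x + a, t • x + b⁆ = s • ⁅x, b⁆ + t • ⁅a, x⁆ + ⁅a, b⁆ := by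
    simp only [add_lie, lie_add, smul_lie, lie_smul, lie_self, smul_zero, zero_add]
    abel
  rw [hexpand]
  exact H.add_mem (H.add_mem (H.smul_mem s ((H.mem_normalizer_iff x).mp hx b hb))
    (H.smul_mem t ((H.mem_normalizer_iff' x).mp hx a ha))) (H.lie_mem ha hb)

theorem mem_of_wcovBy_top_of_mem_normalizer (hH : H ⩿ ⊤) (hx : x ∈ H.normalizer)
    (hx' : x ∈ ⁅(⊤ : LieIdeal R V), (⊤ : LieIdeal R V)⁆) : x ∈ H := by
  let H' : LieSubalgebra R V :=
    { R ∙ x ⊔ H.toSubmodule with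
      lie_mem' := fun hy hz => Submodule.mem_sup_right (lie_mem_of_mem_span_sup hx hy hz) }
  have hle : H ≤ H' := fun y hy => Submodule.mem_sup_right hy
  rcases hH.eq_or_eq hle le_top with h | h
  · exact h ▸ (Submodule.mem_sup_left (Submodule.mem_span_singleton_self x) : x ∈ H')
  · have hmem (y : V) : y ∈ H' := h ▸ LieSubalgebra.mem_top y
    rw [← LieSubmodule.mem_toSubmodule, LieSubmodule.lieIdeal_oper_eq_linear_span'] at hx'
    refine Submodule.span_le (p := H.toSubmodule).mpr ?_ hx'
    rintro _ ⟨y, -, z, -, rfl⟩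
    exact lie_mem_of_mem_span_sup hx (hmem y) (hmem z)

end Normalizer

section Derivation

theorem derivation_sum_apply {R A M ι : Type*} [CommSemiring R] [CommSemiring A]
    [AddCommMonoid M] [Algebra R A] [Module A M] [Module R M]
    (s : Finset ι) (D : ι → Derivation R A M) (a : A) : (∑ i ∈ s, D i) a = ∑ i ∈ s, D i a :=
  (congrFun (map_sum Derivation.coeFnAddMonoidHom D s) a).trans (Finset.sum_apply ..)

theorem derivation_eq_sum_smul_pderiv {R σ : Type*} [CommSemiring R] [Fintype σ]
    (D : Derivation R (MvPolynomial σ R) (MvPolynomial σ R)) :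
    D = ∑ i, D (X i) • pderiv i := by
  classical
  refine derivation_ext fun j => ?_
  simp [derivation_sum_apply, pderiv_X, Pi.single_apply]

end Derivation

section VectorField

variable {𝕜 n}

@[simp]
theorem euler_X (i : Fin n) : euler 𝕜 n (X i) = X i :=
  mkDerivation_X ..

theorem euler_apply_of_isHomogeneous {φ : MvPolynomial (Fin n) 𝕜} {d : ℕ}
    (hφ : φ.IsHomogeneous d) : euler 𝕜 n φ = d • φ := by
  rw [← hφ.sum_X_mul_pderiv, derivation_eq_sum_smul_pderiv (euler 𝕜 n), derivation_sum_apply]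
  simp only [euler_X, Derivation.smul_apply, smul_eq_mul]

theorem mem_VectP_iff_lie {p : ℤ} {D : Vect 𝕜 n} :
    D ∈ VectP 𝕜 n p ↔ ⁅euler 𝕜 n, D⁆ = (p : 𝕜) • D := by
  rw [VectP, Module.End.mem_eigenspace_iff, LieAlgebra.ad_apply]

theorem mem_VectP_of_isHomogeneous {D : Vect 𝕜 n} {d : ℕ}
    (hD : ∀ i, (D (X i)).IsHomogeneous d) : D ∈ VectP 𝕜 n (d - 1) := by
  refine mem_VectP_iff_lie.mpr (derivation_ext fun i => ?_)
  rw [Derivation.commutator_apply, euler_X, euler_apply_of_isHomogeneous (hD i),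
    Derivation.smul_apply]
  push_cast
  rw [sub_smul, one_smul, Nat.cast_smul_eq_nsmul]

theorem smul_pderiv_mem_VectP {φ : MvPolynomial (Fin n) 𝕜} {d : ℕ} (hφ : φ.IsHomogeneous d)
    (i : Fin n) : φ • (pderiv i : Vect 𝕜 n) ∈ VectP 𝕜 n (d - 1) := by
  refine mem_VectP_of_isHomogeneous fun j => ?_
  rcases eq_or_ne j i with rfl | hji
  · simpa using hφ
  · simpa [pderiv_X_of_ne hji] using isHomogeneous_zero (Fin n) 𝕜 d

theorem iSup_VectP_eq_top : ⨆ p ≥ (-1 : ℤ), VectP 𝕜 n p = ⊤ := by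
  refine eq_top_iff.mpr fun D _ => ?_
  rw [derivation_eq_sum_smul_pderiv D]
  refine Submodule.sum_mem _ fun i _ => ?_
  rw [← sum_homogeneousComponent (D (X i)), Finset.sum_smul]
  refine Submodule.sum_mem _ fun d _ => ?_
  exact Submodule.mem_iSup_of_mem (d - 1 : ℤ) (Submodule.mem_iSup_of_mem (by lia)
    (smul_pderiv_mem_VectP (homogeneousComponent_isHomogeneous d _) i))

theorem two_smul_euler_eq_sum_lie :
    (2 : 𝕜) • euler 𝕜 n =
      ∑ i, ⁅(pderiv i : Vect 𝕜 n), (X i ^ 2 : MvPolynomial (Fin n) 𝕜) • pderiv i⁆ := by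
  refine derivation_ext fun j => ?_
  rw [derivation_sum_apply, Finset.sum_eq_single j]
  · simp [Derivation.commutator_apply, ofNat_smul_eq_nsmul]
  · intro i _ hij
    simp [Derivation.commutator_apply, pderiv_X_of_ne hij.symm]
  · simp

theorem euler_mem_lie_top_top [NeZero (2 : 𝕜)] :
    euler 𝕜 n ∈ ⁅(⊤ : LieIdeal 𝕜 (Vect 𝕜 n)), (⊤ : LieIdeal 𝕜 (Vect 𝕜 n))⁆ := by
  rw [← LieSubmodule.mem_toSubmodule, ← Submodule.smul_mem_iff _ (two_ne_zero (α := 𝕜)),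
    two_smul_euler_eq_sum_lie]
  exact Submodule.sum_mem _ fun i _ =>
    LieSubmodule.lie_mem_lie (LieSubmodule.mem_top _) (LieSubmodule.mem_top _)

variable {L : LieSubalgebra 𝕜 (Vect 𝕜 n)}

theorem isGradedSubalg_of_euler_mem (hL : euler 𝕜 n ∈ L) : IsGradedSubalg 𝕜 n L := by
  have hstable : ∀ D ∈ L.toSubmodule, LieAlgebra.ad 𝕜 (Vect 𝕜 n) (euler 𝕜 n) D ∈ L.toSubmodule :=
    fun D hD => L.lie_mem hL hD
  have hinf := inf_iSup_eigenspace hstable fun p : {p : ℤ // p ≥ -1} => (p : 𝕜)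
  calc L.toSubmodule = L.toSubmodule ⊓ ⨆ p ≥ (-1 : ℤ), VectP 𝕜 n p := by
        rw [iSup_VectP_eq_top, inf_top_eq]
    _ = ⨆ p ≥ (-1 : ℤ), L.toSubmodule ⊓ VectP 𝕜 n p := by
        simpa only [VectP, iSup_subtype] using hinf

theorem IsGradedSubalg.euler_mem_normalizer (hL : IsGradedSubalg 𝕜 n L) :
    euler 𝕜 n ∈ L.normalizer := by
  have hle : L.toSubmodule ≤ L.toSubmodule.comap (LieAlgebra.ad 𝕜 (Vect 𝕜 n) (euler 𝕜 n)) := by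
    conv_lhs => rw [hL]
    refine iSup₂_le fun p _ D hD => ?_
    rw [Submodule.mem_comap, LieAlgebra.ad_apply, mem_VectP_iff_lie.mp hD.2]
    exact L.smul_mem _ hD.1
  exact (L.mem_normalizer_iff _).mpr fun D hD => hle hD

theorem IsMaxSubalg.wcovBy_top (hL : IsMaxSubalg 𝕜 n L) : L ⩿ ⊤ :=
  wcovBy_iff_le_and_eq_or_eq.mpr ⟨le_top, fun L' hle _ => hL L' hle⟩

end VectorField

/- In characteristic `q > 0` the space `VectP 𝕜 n p` depends only on `p` modulo `q`, so there
`IsGradedSubalg` means graded by `ℤ/q`. -/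
theorem statement1_general (𝕜 : Type*) [Field 𝕜] [NeZero (2 : 𝕜)] (n : ℕ)
    (L : LieSubalgebra 𝕜 (Vect 𝕜 n)) (hmax : IsMaxSubalg 𝕜 n L) :
    euler 𝕜 n ∈ L ↔ IsGradedSubalg 𝕜 n L :=
  ⟨isGradedSubalg_of_euler_mem, fun hL => mem_of_wcovBy_top_of_mem_normalizer hmax.wcovBy_top
    hL.euler_mem_normalizer euler_mem_lie_top_top⟩

/-- Let `L` be a maximal subalgebra of `Vect_pol(E)` (`𝕜 = ℝ` or `ℂ`).
Then the Euler vector field `ℰ` belongs to `L` if and only if `L` is graded. -/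
theorem statement1 (𝕜 : Type) [RCLike 𝕜] (n : ℕ) (hn : 0 < n)
    (L : LieSubalgebra 𝕜 (Vect 𝕜 n)) (hmax : IsMaxSubalg 𝕜 n L) :
    euler 𝕜 n ∈ L ↔ IsGradedSubalg 𝕜 n L :=
  statement1_general 𝕜 n L hmax
end

section
/- Let L_{−1}, L_0 and L_+ be vector subspaces of Vect_{−1}(E), Vect_0(E) and ⊕_{i ≥ 1} Vect_i(E) respectively, such that (1) L_{−1} ⊕ L_0 is a Lie subalgebra of Vect_pol(E), and (2) [L_{−1}, L_+] ⊆ L_0 ⊕ L_+ and [L_0, L_+] ⊆ L_+. Set C^0(L_+) = L_+ and C^{k+1}(L_+) = [L_+, C^k(L_+)] for k ∈ ℕ. Then the smallest Lie subalgebra of Vect_pol(E) containing L_{−1} ⊕ L_0 ⊕ L_+ is L_{−1} ⊕ L_0 ⊕ Σ_{k ∈ ℕ} C^k(L_+). In particular, if L_+ ⊆ Vect_1(E), this subalgebra is graded. -/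
/-!
Let `G` be the Lie subalgebra generated by `L₊`. By the Jacobi identity
`[[L₊, C^i], C^j] ⊆ [L₊, [C^i, C^j]] + [C^i, [L₊, C^j]]`, so induction on `i` gives
`[C^i, C^j] ⊆ C^(i+j+1)`, and therefore `G = Σ_k C^k(L₊)`.

A derivation which maps generators of `G` into a `G`-stable subspace `M` maps all of `G` into `M`.
With `M = G` this gives `[L₀, G] ⊆ G`; then `M = L₀ + G` is `G`-stable, which gives
`[L₋₁, G] ⊆ L₀ + G`. Hence `L₋₁ + L₀ + G` is closed under the bracket. If `L₊` has degree `1`, then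
`C^k(L₊)` has degree `k + 1`, so this sum is spanned by homogeneous elements.
-/

open MvPolynomial

variable (𝕜 : Type*) [Field 𝕜] (n : ℕ)

/-- The descending sequence `C^0(L₊) = L₊`, `C^{k+1}(L₊) = [L₊, C^k(L₊)]`. -/
noncomputable def descC (Lplus : Submodule 𝕜 (Vect 𝕜 n)) : ℕ → Submodule 𝕜 (Vect 𝕜 n)
  | 0 => Lplus
  | (k + 1) => Submodule.span 𝕜 {z | ∃ x ∈ Lplus, ∃ y ∈ descC Lplus k, z = ⁅x, y⁆}

section LieAlgebra

open LieSubalgebra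

variable {R L : Type*} [CommRing R] [LieRing L] [LieAlgebra R L]

/-- The bracket `⁅A, B⁆` of two submodules of a Lie algebra: the span of all `⁅a, b⁆` with `a ∈ A`
and `b ∈ B`. Mathlib only has it when `A` is an ideal and `B` a Lie submodule. -/
instance submoduleBracket : Bracket (Submodule R L) (Submodule R L) :=
  ⟨Submodule.map₂ (LieAlgebra.ad R L : L →ₗ[R] Module.End R L)⟩

theorem lie_mem_submodule_lie {A B : Submodule R L} {a b : L} (ha : a ∈ A) (hb : b ∈ B) :
    ⁅a, b⁆ ∈ ⁅A, B⁆ :=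
  Submodule.apply_mem_map₂ (LieAlgebra.ad R L : L →ₗ[R] Module.End R L) ha hb

theorem submodule_lie_le_iff {A B C : Submodule R L} :
    ⁅A, B⁆ ≤ C ↔ ∀ a ∈ A, ∀ b ∈ B, ⁅a, b⁆ ∈ C :=
  Submodule.map₂_le

theorem submodule_lie_mono {A A' B B' : Submodule R L} (hA : A ≤ A') (hB : B ≤ B') :
    ⁅A, B⁆ ≤ ⁅A', B'⁆ :=
  Submodule.map₂_le_map₂ hA hB

theorem sup_submodule_lie (A B C : Submodule R L) : ⁅A ⊔ B, C⁆ = ⁅A, C⁆ ⊔ ⁅B, C⁆ :=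
  Submodule.map₂_sup_left _ A B C

theorem submodule_lie_sup (A B C : Submodule R L) : ⁅A, B ⊔ C⁆ = ⁅A, B⁆ ⊔ ⁅A, C⁆ :=
  Submodule.map₂_sup_right _ A B C

theorem iSup_submodule_lie {ι : Sort*} (A : ι → Submodule R L) (B : Submodule R L) :
    ⁅⨆ i, A i, B⁆ = ⨆ i, ⁅A i, B⁆ :=
  Submodule.map₂_iSup_left _ A B

theorem submodule_lie_iSup {ι : Sort*} (A : Submodule R L) (B : ι → Submodule R L) :
    ⁅A, ⨆ i, B i⁆ = ⨆ i, ⁅A, B i⁆ :=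
  Submodule.map₂_iSup_right _ A B

theorem submodule_lie_comm (A B : Submodule R L) : ⁅A, B⁆ = ⁅B, A⁆ := by
  have lie_le_swap (A B : Submodule R L) : ⁅A, B⁆ ≤ ⁅B, A⁆ :=
    submodule_lie_le_iff.2 fun a ha b hb ↦ by
      rw [← lie_skew]
      exact neg_mem (lie_mem_submodule_lie hb ha)
  exact (lie_le_swap A B).antisymm (lie_le_swap B A)

theorem submodule_lie_lie_le (A B C : Submodule R L) :
    ⁅⁅A, B⁆, C⁆ ≤ ⁅A, ⁅B, C⁆⁆ ⊔ ⁅B, ⁅A, C⁆⁆ := by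
  have ad_mem (c : L) (hc : c ∈ C) :
      ⁅A, B⁆ ≤ (⁅A, ⁅B, C⁆⁆ ⊔ ⁅B, ⁅A, C⁆⁆).comap (LieAlgebra.ad R L c) :=
    submodule_lie_le_iff.2 fun a ha b hb ↦ by
      rw [Submodule.mem_comap, LieAlgebra.ad_apply, ← lie_skew, lie_lie]
      exact neg_mem (sub_mem
        (Submodule.mem_sup_left (lie_mem_submodule_lie ha (lie_mem_submodule_lie hb hc)))
        (Submodule.mem_sup_right (lie_mem_submodule_lie hb (lie_mem_submodule_lie ha hc))))
  rw [submodule_lie_comm, submodule_lie_le_iff]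
  exact fun c hc x hx ↦ ad_mem c hc hx

theorem lie_eigenspace_ad_le (e : L) (a b : R) :
    ⁅(LieAlgebra.ad R L e).eigenspace a, (LieAlgebra.ad R L e).eigenspace b⁆ ≤
      (LieAlgebra.ad R L e).eigenspace (a + b) := by
  refine submodule_lie_le_iff.2 fun x hx y hy ↦ ?_
  rw [Module.End.mem_eigenspace_iff, LieAlgebra.ad_apply] at *
  rw [leibniz_lie, hx, hy, smul_lie, lie_smul, add_smul]

theorem lieSpan_toSubmodule_eq_self_iff {A : Submodule R L} :
    (lieSpan R L (A : Set L)).toSubmodule = A ↔ ⁅A, A⁆ ≤ A := by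
  rw [coe_lieSpan_submodule_eq_iff, A.exists_lieSubalgebra_coe_eq_iff, submodule_lie_le_iff]
  exact ⟨fun h a ha b hb ↦ h a b ha hb, fun h a b ha hb ↦ h a ha b hb⟩

theorem lie_toSubmodule_le (K : LieSubalgebra R L) :
    ⁅K.toSubmodule, K.toSubmodule⁆ ≤ K.toSubmodule :=
  submodule_lie_le_iff.2 fun _ ha _ hb ↦ K.lie_mem ha hb

theorem lie_lieSpan_le {A M : Submodule R L} {s : Set L}
    (hs : ∀ a ∈ A, ∀ x ∈ s, ⁅a, x⁆ ∈ M) (hM : ⁅M, (lieSpan R L s).toSubmodule⁆ ≤ M) :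
    ⁅A, (lieSpan R L s).toSubmodule⁆ ≤ M := by
  refine submodule_lie_le_iff.2 fun a ha x hx ↦ ?_
  rw [mem_toSubmodule] at hx
  induction hx using lieSpan_induction with
  | mem x hx => exact hs a ha x hx
  | zero => rw [lie_zero]; exact M.zero_mem
  | add x y _ _ hx hy => rw [lie_add]; exact M.add_mem hx hy
  | smul r x _ hx => rw [lie_smul]; exact M.smul_mem r hx
  | lie x y hx hy hax hay =>
    rw [submodule_lie_le_iff] at hM
    rw [leibniz_lie, ← lie_skew x]
    exact M.add_mem (hM _ hax y hy) (M.neg_mem (hM _ hay x hx))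

theorem lieSpan_sup_toSubmodule {A B : Submodule R L} (hA : ⁅A, A⁆ ≤ A)
    (hAB : ⁅A, (lieSpan R L (B : Set L)).toSubmodule⁆ ≤
      A ⊔ (lieSpan R L (B : Set L)).toSubmodule) :
    (lieSpan R L ((A ⊔ B : Submodule R L) : Set L)).toSubmodule =
      A ⊔ (lieSpan R L (B : Set L)).toSubmodule := by
  set G := lieSpan R L (B : Set L)
  have hclosed : ⁅A ⊔ G.toSubmodule, A ⊔ G.toSubmodule⁆ ≤ A ⊔ G.toSubmodule := by
    rw [sup_submodule_lie, submodule_lie_sup, submodule_lie_sup,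
      submodule_lie_comm G.toSubmodule A]
    exact sup_le (sup_le (hA.trans le_sup_left) hAB)
      (sup_le hAB ((lie_toSubmodule_le G).trans le_sup_right))
  apply le_antisymm
  · rw [← lieSpan_toSubmodule_eq_self_iff.2 hclosed]
    exact lieSpan_mono (sup_le_sup_left (c := A) (show B ≤ G.toSubmodule from subset_lieSpan))
  · exact sup_le (le_sup_left.trans subset_lieSpan)
      (lieSpan_mono (show B ≤ A ⊔ B from le_sup_right))

/-- The span of the right-normed brackets `⁅x₀, ⁅x₁, … ⁅xₖ₋₁, xₖ⁆⁆⁆` of elements of `P`, that is,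
`C^k(P)` in an arbitrary Lie algebra. The index `k` counts brackets: there are `k + 1` factors. -/
def rightNormedSpan (P : Submodule R L) : ℕ → Submodule R L
  | 0 => P
  | k + 1 => ⁅P, rightNormedSpan P k⁆

theorem lie_rightNormedSpan_le (P : Submodule R L) (i j : ℕ) :
    ⁅rightNormedSpan P i, rightNormedSpan P j⁆ ≤ rightNormedSpan P (i + j + 1) := by
  induction i generalizing j with
  | zero => rw [zero_add]; exact le_rfl
  | succ i ih =>
    refine (submodule_lie_lie_le P (rightNormedSpan P i) (rightNormedSpan P j)).trans
      (sup_le ?_ ?_)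
    · rw [Nat.add_right_comm i 1 j]
      exact submodule_lie_mono le_rfl (ih j)
    · rw [Nat.add_assoc i 1 j, Nat.add_comm 1 j]
      exact ih (j + 1)

theorem lieSpan_eq_iSup_rightNormedSpan (P : Submodule R L) :
    (lieSpan R L (P : Set L)).toSubmodule = ⨆ k, rightNormedSpan P k := by
  have hclosed : ⁅⨆ k, rightNormedSpan P k, ⨆ k, rightNormedSpan P k⁆ ≤
      ⨆ k, rightNormedSpan P k := by
    simp only [iSup_submodule_lie, submodule_lie_iSup]
    exact iSup₂_le fun i j ↦ (lie_rightNormedSpan_le P _ _).trans (le_iSup (rightNormedSpan P) _)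
  apply le_antisymm
  · rw [← lieSpan_toSubmodule_eq_self_iff.2 hclosed]
    exact lieSpan_mono (le_iSup (rightNormedSpan P) 0)
  · refine iSup_le fun k ↦ ?_
    induction k with
    | zero => exact subset_lieSpan
    | succ k ih =>
      exact (submodule_lie_mono subset_lieSpan ih).trans (lie_toSubmodule_le _)

theorem rightNormedSpan_le_of_le_one {V : ℤ → Submodule R L}
    (hV : ∀ p q, ⁅V p, V q⁆ ≤ V (p + q)) {P : Submodule R L} (hP : P ≤ V 1) (k : ℕ) :
    rightNormedSpan P k ≤ V (k + 1) := by
  induction k with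
  | zero => simpa only [rightNormedSpan, Nat.cast_zero, zero_add] using hP
  | succ k ih =>
    rw [Nat.cast_succ, add_comm _ (1 : ℤ)]
    exact (submodule_lie_mono hP ih).trans (hV 1 (k + 1))

variable {Lm1 L0 Lplus : Submodule R L}

theorem lieSpan_sup_sup_eq (hsub : ⁅Lm1 ⊔ L0, Lm1 ⊔ L0⁆ ≤ Lm1 ⊔ L0)
    (hbr1 : ⁅Lm1, Lplus⁆ ≤ L0 ⊔ Lplus) (hbr2 : ⁅L0, Lplus⁆ ≤ Lplus) :
    (lieSpan R L ((Lm1 ⊔ L0 ⊔ Lplus : Submodule R L) : Set L)).toSubmodule =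
      Lm1 ⊔ L0 ⊔ ⨆ k, rightNormedSpan Lplus k := by
  rw [← lieSpan_eq_iSup_rightNormedSpan]
  set G := (lieSpan R L (Lplus : Set L)).toSubmodule with hG
  have hle : Lplus ≤ G := subset_lieSpan
  have hGG : ⁅G, G⁆ ≤ G := lie_toSubmodule_le _
  have h0G : ⁅L0, G⁆ ≤ G := lie_lieSpan_le (submodule_lie_le_iff.1 (hbr2.trans hle)) hGG
  have hstable : ⁅L0 ⊔ G, G⁆ ≤ L0 ⊔ G := by
    rw [sup_submodule_lie]
    exact (sup_le h0G hGG).trans le_sup_right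
  have hm1G : ⁅Lm1, G⁆ ≤ L0 ⊔ G :=
    lie_lieSpan_le (submodule_lie_le_iff.1 (hbr1.trans (sup_le_sup_left hle L0))) hstable
  refine lieSpan_sup_toSubmodule hsub ?_
  rw [← hG, sup_submodule_lie, sup_assoc]
  exact sup_le (hm1G.trans le_sup_right) (h0G.trans (le_sup_right.trans le_sup_right))

theorem sup_sup_iSup_eq_iSup_inf {V : ℤ → Submodule R L} {C : ℕ → Submodule R L}
    (hm1 : Lm1 ≤ V (-1)) (h0 : L0 ≤ V 0) (hC : ∀ k, C k ≤ V (k + 1)) :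
    Lm1 ⊔ L0 ⊔ ⨆ k, C k = ⨆ p ≥ (-1 : ℤ), (Lm1 ⊔ L0 ⊔ ⨆ k, C k) ⊓ V p := by
  refine le_antisymm (sup_le (sup_le ?_ ?_) (iSup_le fun k ↦ ?_)) (iSup₂_le fun _ _ ↦ inf_le_left)
  · exact le_iSup₂_of_le (-1) le_rfl (le_inf (le_sup_left.trans le_sup_left) hm1)
  · exact le_iSup₂_of_le 0 (by decide) (le_inf (le_sup_right.trans le_sup_left) h0)
  · exact le_iSup₂_of_le (k + 1 : ℤ) (by lia)
      (le_inf ((le_iSup C k).trans le_sup_right) (hC k))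

theorem statement3_general {V : ℤ → Submodule R L} (hV : ∀ p q, ⁅V p, V q⁆ ≤ V (p + q))
    (hm1 : Lm1 ≤ V (-1)) (h0 : L0 ≤ V 0) (hsub : ⁅Lm1 ⊔ L0, Lm1 ⊔ L0⁆ ≤ Lm1 ⊔ L0)
    (hbr1 : ⁅Lm1, Lplus⁆ ≤ L0 ⊔ Lplus) (hbr2 : ⁅L0, Lplus⁆ ≤ Lplus) :
    (lieSpan R L ((Lm1 ⊔ L0 ⊔ Lplus : Submodule R L) : Set L)).toSubmodule =
      Lm1 ⊔ L0 ⊔ ⨆ k, rightNormedSpan Lplus k ∧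
    (Lplus ≤ V 1 →
      (lieSpan R L ((Lm1 ⊔ L0 ⊔ Lplus : Submodule R L) : Set L)).toSubmodule =
        ⨆ p ≥ (-1 : ℤ),
          (lieSpan R L ((Lm1 ⊔ L0 ⊔ Lplus : Submodule R L) : Set L)).toSubmodule ⊓ V p) := by
  rw [lieSpan_sup_sup_eq hsub hbr1 hbr2]
  exact ⟨rfl, fun hplus ↦
    sup_sup_iSup_eq_iSup_inf hm1 h0 (rightNormedSpan_le_of_le_one hV hplus)⟩

end LieAlgebra

theorem descC_eq_rightNormedSpan (P : Submodule 𝕜 (Vect 𝕜 n)) :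
    descC 𝕜 n P = rightNormedSpan P := by
  funext k
  induction k with
  | zero => rfl
  | succ k ih =>
    refine le_antisymm (Submodule.span_le.2 ?_)
      (submodule_lie_le_iff.2 fun x hx y hy ↦ Submodule.subset_span ⟨x, hx, y, ih ▸ hy, rfl⟩)
    rintro _ ⟨x, hx, y, hy, rfl⟩
    exact lie_mem_submodule_lie hx (ih ▸ hy)

theorem lie_vectP_le (p q : ℤ) : ⁅VectP 𝕜 n p, VectP 𝕜 n q⁆ ≤ VectP 𝕜 n (p + q) := by
  rw [VectP, VectP, VectP, Int.cast_add]
  exact lie_eigenspace_ad_le (euler 𝕜 n) (p : 𝕜) (q : 𝕜)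

/-- Let `L₋₁ ⊆ Vect₋₁(E)`, `L₀ ⊆ Vect₀(E)` and `L₊ ⊆ ⊕_{i ≥ 1} Vect_i(E)` be subspaces such
that `L₋₁ ⊕ L₀` is a Lie subalgebra, `[L₋₁, L₊] ⊆ L₀ ⊕ L₊` and `[L₀, L₊] ⊆ L₊`.  Then the
smallest Lie subalgebra containing `L₋₁ ⊕ L₀ ⊕ L₊` is `L₋₁ ⊕ L₀ ⊕ Σ_k C^k(L₊)`; in
particular, if `L₊ ⊆ Vect₁(E)`, this subalgebra is graded. -/
theorem statement3 (𝕜 : Type) [RCLike 𝕜] (n : ℕ) (hn : 0 < n)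
    (Lm1 L0 Lplus : Submodule 𝕜 (Vect 𝕜 n))
    (hm1 : Lm1 ≤ VectP 𝕜 n (-1)) (h0 : L0 ≤ VectP 𝕜 n 0)
    (hplus : Lplus ≤ ⨆ i ≥ (1 : ℤ), VectP 𝕜 n i)
    (hsub : ∀ x ∈ Lm1 ⊔ L0, ∀ y ∈ Lm1 ⊔ L0, ⁅x, y⁆ ∈ Lm1 ⊔ L0)
    (hbr1 : ∀ x ∈ Lm1, ∀ y ∈ Lplus, ⁅x, y⁆ ∈ L0 ⊔ Lplus)
    (hbr2 : ∀ x ∈ L0, ∀ y ∈ Lplus, ⁅x, y⁆ ∈ Lplus) :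
    (LieSubalgebra.lieSpan 𝕜 (Vect 𝕜 n)
        ((Lm1 ⊔ L0 ⊔ Lplus : Submodule 𝕜 (Vect 𝕜 n)) : Set (Vect 𝕜 n))).toSubmodule =
      Lm1 ⊔ L0 ⊔ (⨆ k : ℕ, descC 𝕜 n Lplus k) ∧
    (Lplus ≤ VectP 𝕜 n 1 →
      IsGradedSubalg 𝕜 n (LieSubalgebra.lieSpan 𝕜 (Vect 𝕜 n)
        ((Lm1 ⊔ L0 ⊔ Lplus : Submodule 𝕜 (Vect 𝕜 n)) : Set (Vect 𝕜 n)))) := by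
  rw [descC_eq_rightNormedSpan]
  exact statement3_general (lie_vectP_le 𝕜 n) hm1 h0 (submodule_lie_le_iff.2 hsub)
    (submodule_lie_le_iff.2 hbr1) (submodule_lie_le_iff.2 hbr2)
end

section
/- Let F be a vector subspace of Vect_{−1}(E) and for i ≥ −1 set n_i(F) = {X ∈ Vect_i(E) : ad(F)^{i+1} X ⊆ F}, i.e. all iterated brackets [h_1,[h_2,[...,[h_{i+1}, X]...]]] with h_1,...,h_{i+1} ∈ F lie in F (so n_{−1}(F) = F). Then [n_i(F), n_j(F)] ⊆ n_{i+j}(F) for all i, j ≥ −1; consequently N(F) = ⊕_{i ≥ −1} n_i(F) is a graded Lie subalgebra of Vect_pol(E). -/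
/-!
Let `T k` be the space of all `X` with `ad(F)^k X ⊆ F`. Peeling off the innermost bracket and
using the Leibniz rule `⁅h, ⁅X, Y⁆⁆ = ⁅⁅h, X⁆, Y⁆ + ⁅X, ⁅h, Y⁆⁆`, induction shows
`⁅T a, T b⁆ ⊆ T (a + b - 1)` as soon as `a + b ≥ 1`; in the base case `X` or `Y` lies in `F`, so
that bracketing with it is itself one of the brackets counted by `T`. With `a = i + 1` and
`b = j + 1` this is the claim, except for `i = j = -1`, where `⁅X, Y⁆` lies in
`Vect_{-2}(E)`. This space vanishes, because the eigenvalues of `ℰ` on polynomials are the degrees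
`0, 1, 2, …`, so that those of `ad(ℰ)` on vector fields are at least `-1`.
-/

open MvPolynomial

variable (𝕜 : Type*) [Field 𝕜] (n : ℕ)

/-- The iterated adjoint action along a list: `iterAd [h₁, …, h_m] X = ⁅h₁, ⁅h₂, …, ⁅h_m, X⁆…⁆⁆`. -/
noncomputable def iterAd (l : List (Vect 𝕜 n)) : Module.End 𝕜 (Vect 𝕜 n) :=
  (l.map fun h => LieAlgebra.ad 𝕜 (Vect 𝕜 n) h).prod

/-- `n_i(F) = {X ∈ Vect_i(E) : ad(F)^{i+1} X ⊆ F}`: all iterated brackets of `X` with `i+1`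
elements of `F` lie in `F`. -/
noncomputable def nF (F : Submodule 𝕜 (Vect 𝕜 n)) (i : ℤ) : Submodule 𝕜 (Vect 𝕜 n) where
  carrier := {X | X ∈ VectP 𝕜 n i ∧
    ∀ l : List (Vect 𝕜 n), (∀ h ∈ l, h ∈ F) → l.length = (i + 1).toNat →
      iterAd 𝕜 n l X ∈ F}
  add_mem' := by
    rintro a b ⟨ha1, ha2⟩ ⟨hb1, hb2⟩
    refine ⟨add_mem ha1 hb1, fun l hl hlen => ?_⟩
    rw [map_add]
    exact add_mem (ha2 l hl hlen) (hb2 l hl hlen)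
  zero_mem' := ⟨zero_mem _, fun l hl hlen => by rw [map_zero]; exact zero_mem F⟩
  smul_mem' := by
    rintro c a ⟨ha1, ha2⟩
    refine ⟨Submodule.smul_mem _ c ha1, fun l hl hlen => ?_⟩
    rw [map_smul]
    exact Submodule.smul_mem F c (ha2 l hl hlen)

section LieAlgebra

variable {R L : Type*} [CommRing R] [LieRing L] [LieAlgebra R L]

lemma lie_mem_eigenspace_ad_add {e X Y : L} {a b : R}
    (hX : X ∈ Module.End.eigenspace (LieAlgebra.ad R L e) a)
    (hY : Y ∈ Module.End.eigenspace (LieAlgebra.ad R L e) b) :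
    ⁅X, Y⁆ ∈ Module.End.eigenspace (LieAlgebra.ad R L e) (a + b) := by
  rw [Module.End.mem_eigenspace_iff, LieAlgebra.ad_apply] at *
  rw [leibniz_lie, hX, hY, smul_lie, lie_smul, add_smul]

lemma lie_mem_biSup {ι : Type*} {p : ι → Prop} {W : ι → Submodule R L}
    (hW : ∀ i, p i → ∀ j, p j → ∀ X ∈ W i, ∀ Y ∈ W j, ⁅X, Y⁆ ∈ ⨆ (k) (_ : p k), W k) {X Y : L}
    (hX : X ∈ ⨆ (i) (_ : p i), W i) (hY : Y ∈ ⨆ (i) (_ : p i), W i) :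
    ⁅X, Y⁆ ∈ ⨆ (i) (_ : p i), W i := by
  suffices Submodule.map₂ (LieAlgebra.ad R L : L →ₗ[R] Module.End R L)
      (⨆ (i) (_ : p i), W i) (⨆ (i) (_ : p i), W i) ≤ ⨆ (i) (_ : p i), W i from
    Submodule.map₂_le.1 this X hX Y hY
  simp only [Submodule.map₂_iSup_left, Submodule.map₂_iSup_right, iSup_le_iff, Submodule.map₂_le]
  exact fun j hj i hi X hX Y hY => hW i hi j hj X hX Y hY

/-- The space `{X | ad(F)^k X ⊆ F}` of the elements of a Lie algebra which `k` successive brackets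
with elements of `F` send into `F`. The recursion peels off the innermost bracket. -/
def adTransporter (F : Submodule R L) : ℕ → Submodule R L
  | 0 => F
  | k + 1 => ⨅ h ∈ F, (adTransporter F k).comap (LieAlgebra.ad R L h)

variable {F : Submodule R L}

@[simp]
lemma adTransporter_zero : adTransporter F 0 = F := rfl

lemma mem_adTransporter_succ {k : ℕ} {X : L} :
    X ∈ adTransporter F (k + 1) ↔ ∀ h ∈ F, ⁅h, X⁆ ∈ adTransporter F k := by
  simp [adTransporter]

lemma mem_adTransporter_iff_forall_list {k : ℕ} {X : L} :
    X ∈ adTransporter F k ↔ ∀ l : List L, (∀ h ∈ l, h ∈ F) → l.length = k →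
      (l.map fun h => LieAlgebra.ad R L h).prod X ∈ F := by
  induction k generalizing X with
  | zero =>
    constructor
    · rintro hX l - hl
      simpa [List.length_eq_zero_iff.1 hl] using hX
    · exact fun hX => by simpa using hX [] (by simp) rfl
  | succ k ih =>
    simp only [mem_adTransporter_succ, ih]
    constructor
    · intro hX l hl hlen
      obtain rfl | ⟨l, h, rfl⟩ := List.eq_nil_or_concat' l
      · simp at hlen
      · have hh : h ∈ F := hl h (by simp)
        have hl' : ∀ g ∈ l, g ∈ F := fun g hg => hl g (by simp [hg])
        simpa using hX h hh l hl' (by simpa using hlen)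
    · intro hX h hh l hl hlen
      have hlh : ∀ g ∈ l ++ [h], g ∈ F := by simpa [or_imp, forall_and] using ⟨hl, hh⟩
      simpa using hX (l ++ [h]) hlh (by simp [hlen])

lemma lie_mem_adTransporter {a b c : ℕ} {X Y : L} (hc : a + b = c + 1)
    (hX : X ∈ adTransporter F a) (hY : Y ∈ adTransporter F b) : ⁅X, Y⁆ ∈ adTransporter F c := by
  match a, b, c with
  | 0, b, c =>
    obtain rfl : b = c + 1 := by omega
    exact mem_adTransporter_succ.1 hY X hX
  | a, 0, c =>
    obtain rfl : a = c + 1 := by omega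
    rw [← lie_skew]
    exact neg_mem (mem_adTransporter_succ.1 hX Y hY)
  | a + 1, b + 1, 0 => omega
  | a + 1, b + 1, c + 1 =>
    refine mem_adTransporter_succ.2 fun h hh => ?_
    have hhX : ⁅h, X⁆ ∈ adTransporter F a := mem_adTransporter_succ.1 hX h hh
    have hhY : ⁅h, Y⁆ ∈ adTransporter F b := mem_adTransporter_succ.1 hY h hh
    rw [leibniz_lie]
    exact add_mem (lie_mem_adTransporter (by omega) hhX hY)
      (lie_mem_adTransporter (by omega) hX hhY)

end LieAlgebra

section EulerDerivation

variable {R σ : Type*} [CommSemiring R]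

lemma mkDerivation_X_monomial (m : σ →₀ ℕ) (r : R) :
    mkDerivation R (X : σ → MvPolynomial σ R) (monomial m r) = m.degree • monomial m r := by
  rw [mkDerivation_monomial, Finsupp.sum, Finsupp.degree_apply, Finset.sum_smul,
    Finset.smul_sum]
  refine Finset.sum_congr rfl fun i _ => ?_
  rw [← smul_assoc, smul_monomial, smul_eq_mul, smul_eq_mul, ← pderiv_monomial, mul_comm,
    X_mul_pderiv_monomial]

lemma coeff_mkDerivation_X (f : MvPolynomial σ R) (m : σ →₀ ℕ) :
    coeff m (mkDerivation R X f) = m.degree * coeff m f := by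
  classical
  induction f using MvPolynomial.induction_on' with
  | monomial u r =>
    rw [mkDerivation_X_monomial, coeff_smul, coeff_monomial, nsmul_eq_mul]
    split_ifs with h <;> simp [h]
  | add p q hp hq => rw [map_add, coeff_add, coeff_add, hp, hq, mul_add]

lemma eq_zero_of_mkDerivation_X_eq_smul [IsCancelMulZero R] {f : MvPolynomial σ R} {c : R}
    (hc : ∀ d : ℕ, (d : R) ≠ c) (hf : mkDerivation R X f = c • f) : f = 0 := by
  ext m
  have hm : (m.degree : R) * coeff m f = c * coeff m f := by
    rw [← coeff_mkDerivation_X, hf, coeff_smul, smul_eq_mul]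
  simpa using (mul_eq_mul_right_iff.1 hm).resolve_left (hc _)

end EulerDerivation

section VectorFields

variable {𝕜 : Type*} [Field 𝕜] {n : ℕ}

lemma lie_mem_VectP {i j : ℤ} {X Y : Vect 𝕜 n} (hX : X ∈ VectP 𝕜 n i) (hY : Y ∈ VectP 𝕜 n j) :
    ⁅X, Y⁆ ∈ VectP 𝕜 n (i + j) := by
  rw [VectP, Int.cast_add]
  exact lie_mem_eigenspace_ad_add hX hY

lemma euler_apply_X_of_mem_VectP {p : ℤ} {Z : Vect 𝕜 n} (hZ : Z ∈ VectP 𝕜 n p) (i : Fin n) :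
    euler 𝕜 n (Z (X i)) = ((p + 1 : ℤ) : 𝕜) • Z (X i) := by
  have hE : ⁅euler 𝕜 n, Z⁆ = (p : 𝕜) • Z := Module.End.mem_eigenspace_iff.1 hZ
  have hEX : euler 𝕜 n (X i) = X i := mkDerivation_X ..
  have hEi : euler 𝕜 n (Z (X i)) - Z (X i) = (p : 𝕜) • Z (X i) := by
    rw [← Derivation.smul_apply, ← hE, Derivation.commutator_apply, hEX]
  rw [Int.cast_add, Int.cast_one, add_smul, one_smul, ← hEi, sub_add_cancel]

lemma nF_eq_VectP_inf_adTransporter (F : Submodule 𝕜 (Vect 𝕜 n)) (i : ℤ) :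
    nF 𝕜 n F i = VectP 𝕜 n i ⊓ adTransporter F (i + 1).toNat := by
  ext X
  exact and_congr_right' mem_adTransporter_iff_forall_list.symm

lemma nF_le_VectP (F : Submodule 𝕜 (Vect 𝕜 n)) (i : ℤ) : nF 𝕜 n F i ≤ VectP 𝕜 n i :=
  fun _ hX => hX.1

variable [CharZero 𝕜]

lemma VectP_eq_bot_of_lt_neg_one {p : ℤ} (hp : p < -1) : VectP 𝕜 n p = ⊥ := by
  refine (Submodule.eq_bot_iff _).2 fun Z hZ => derivation_ext fun i => ?_
  have hdegree (d : ℕ) : (d : 𝕜) ≠ ((p + 1 : ℤ) : 𝕜) := by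
    exact_mod_cast (by omega : (d : ℤ) ≠ p + 1)
  exact eq_zero_of_mkDerivation_X_eq_smul hdegree (euler_apply_X_of_mem_VectP hZ i)

variable {F : Submodule 𝕜 (Vect 𝕜 n)}

lemma lie_mem_nF {i j : ℤ} (hi : -1 ≤ i) (hj : -1 ≤ j) {X Y : Vect 𝕜 n}
    (hX : X ∈ nF 𝕜 n F i) (hY : Y ∈ nF 𝕜 n F j) : ⁅X, Y⁆ ∈ nF 𝕜 n F (i + j) := by
  have hXY : ⁅X, Y⁆ ∈ VectP 𝕜 n (i + j) := lie_mem_VectP hX.1 hY.1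
  rcases lt_or_ge (i + j) (-1) with hij | hij
  · rw [VectP_eq_bot_of_lt_neg_one hij, Submodule.mem_bot] at hXY
    exact hXY ▸ zero_mem _
  · rw [nF_eq_VectP_inf_adTransporter] at *
    exact ⟨hXY, lie_mem_adTransporter (by omega) hX.2 hY.2⟩

lemma nF_le_iSup_nF (k : ℤ) : nF 𝕜 n F k ≤ ⨆ i ≥ (-1 : ℤ), nF 𝕜 n F i := by
  rcases lt_or_ge k (-1) with hk | hk
  · exact ((nF_le_VectP F k).trans (VectP_eq_bot_of_lt_neg_one hk).le).trans bot_le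
  · exact le_iSup₂ (f := fun i (_ : i ≥ (-1 : ℤ)) => nF 𝕜 n F i) k hk

lemma lie_mem_iSup_nF {X Y : Vect 𝕜 n} (hX : X ∈ ⨆ i ≥ (-1 : ℤ), nF 𝕜 n F i)
    (hY : Y ∈ ⨆ i ≥ (-1 : ℤ), nF 𝕜 n F i) : ⁅X, Y⁆ ∈ ⨆ i ≥ (-1 : ℤ), nF 𝕜 n F i := by
  refine lie_mem_biSup (W := nF 𝕜 n F) (fun i hi j hj X hX Y hY => ?_) hX hY
  exact nF_le_iSup_nF (i + j) (lie_mem_nF hi hj hX hY)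

variable (F) in
/-- The Lie subalgebra `N(F) = ⊕_{i ≥ -1} n_i(F)` of `Vect_pol(E)`. It is encoded as a supremum,
which is a direct sum because the `n_i(F)` lie in eigenspaces of `ad(ℰ)` for distinct
eigenvalues. -/
noncomputable def nFSubalg : LieSubalgebra 𝕜 (Vect 𝕜 n) where
  toSubmodule := ⨆ i ≥ (-1 : ℤ), nF 𝕜 n F i
  lie_mem' := lie_mem_iSup_nF

lemma isGradedSubalg_nFSubalg : IsGradedSubalg 𝕜 n (nFSubalg F) := by
  refine le_antisymm (iSup₂_mono fun p _ => ?_) (iSup₂_le fun p _ => inf_le_left)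
  exact le_inf (nF_le_iSup_nF p) (nF_le_VectP F p)

end VectorFields

theorem statement4_general (𝕜 : Type*) [Field 𝕜] [CharZero 𝕜] (n : ℕ)
    (F : Submodule 𝕜 (Vect 𝕜 n)) :
    (∀ i j : ℤ, -1 ≤ i → -1 ≤ j →
      ∀ X ∈ nF 𝕜 n F i, ∀ Y ∈ nF 𝕜 n F j, ⁅X, Y⁆ ∈ nF 𝕜 n F (i + j)) ∧
    ∃ N : LieSubalgebra 𝕜 (Vect 𝕜 n),
      (N.toSubmodule = ⨆ i ≥ (-1 : ℤ), nF 𝕜 n F i) ∧ IsGradedSubalg 𝕜 n N :=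
  ⟨fun _ _ hi hj _ hX _ hY => lie_mem_nF hi hj hX hY, nFSubalg F, rfl, isGradedSubalg_nFSubalg⟩

/-- For a subspace `F ⊆ Vect₋₁(E)` one has `[n_i(F), n_j(F)] ⊆ n_{i+j}(F)` for all
`i, j ≥ -1`; consequently `N(F) = ⊕_{i ≥ -1} n_i(F)` is a graded Lie subalgebra of
`Vect_pol(E)`. -/
theorem statement4 (𝕜 : Type) [RCLike 𝕜] (n : ℕ) (hn : 0 < n)
    (F : Submodule 𝕜 (Vect 𝕜 n)) (hF : F ≤ VectP 𝕜 n (-1)) :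
    (∀ i j : ℤ, -1 ≤ i → -1 ≤ j →
      ∀ X ∈ nF 𝕜 n F i, ∀ Y ∈ nF 𝕜 n F j, ⁅X, Y⁆ ∈ nF 𝕜 n F (i + j)) ∧
    ∃ N : LieSubalgebra 𝕜 (Vect 𝕜 n),
      (N.toSubmodule = ⨆ i ≥ (-1 : ℤ), nF 𝕜 n F i) ∧ IsGradedSubalg 𝕜 n N :=
  statement4_general 𝕜 n F
end

section
/- Let L be a finite-dimensional graded maximal subalgebra of Vect_pol(E). Then every nonzero ideal I of L contains Vect_{−1}(E), i.e. contains every constant vector field. -/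
/-!
A finite-dimensional Lie algebra of polynomial vector fields cannot contain all the polynomial
multiples of a nonzero field. Maximality therefore forces an `L`-stable space `M` of polynomials to
be stable under every field as soon as all the multiples of one nonzero field preserve `M`; if
moreover some field maps some `l ∈ M` to a nonzero constant, then `M` contains all polynomials.

The Euler field `ℰ` normalizes `L` and hence belongs to it, so that an ideal `I` of `L` is the sum
of its `ad ℰ`-weight spaces. A constant field `c` outside such a graded space is thus separated from
it by a linear form `l`: the polynomial `D l` vanishes at the origin for every `D` in the space,
whereas `c l` is a nonzero constant.

* Let `M` consist of the polynomials vanishing, with all their iterated derivatives along the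
  constant fields of `L`, at the origin. It is an ideal, it is `L`-stable because every field of `L`
  has the same value at the origin as a constant field of `L`, and it is preserved by the multiples
  of `l • c` for `l ∈ M`. A linear form `l` separating a constant field `c` from `L` would belong to
  `M`, whence `1 ∈ M`, which is absurd: all constant fields belong to `L`.
* Let `M` consist of the first integrals of `I`, which are preserved by all multiples of the fields
  of `I`. If `l` separates a constant field from `I`, then `l ∈ M`: for `D ∈ I` and constant `∂`
  we have `∂ (D l) = ⁅∂, D⁆ l` with `⁅∂, D⁆ ∈ I`, so all the derivatives of `D l` vanish at the
  origin. Hence all polynomials are first integrals of `I`, contradicting `I ≠ 0`.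
-/

open MvPolynomial

variable (𝕜 : Type*) [Field 𝕜] (n : ℕ)

namespace PolyVect

theorem eq_iSup_inf_eigenspace {K V : Type*} [Field K] [AddCommGroup V] [Module K V]
    {f : Module.End K V} {p : Submodule K V} (hp : ∀ x ∈ p, f x ∈ p)
    (hf : ⨆ μ, f.eigenspace μ = ⊤) : p = ⨆ μ, p ⊓ f.eigenspace μ := by
  refine le_antisymm (fun x hx => ?_) (iSup_le fun μ => inf_le_left)
  obtain ⟨v, hv, rfl⟩ := (Submodule.mem_iSup_iff_exists_finsupp _ x).mp (hf ▸ Submodule.mem_top)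
  refine Submodule.sum_mem _ fun μ hμ => Submodule.mem_iSup_of_mem μ ⟨?_, hv μ⟩
  classical
  let q := Lagrange.basis v.support id μ
  have hq (ν : K) : Polynomial.aeval f q (v ν) = q.eval (id ν) • v ν :=
    Module.End.aeval_apply_of_mem_apply_eq_smul (Module.End.mem_eigenspace_iff.mp (hv ν))
  have interpolation : Polynomial.aeval f q (v.sum fun _ y => y) = v μ := by
    rw [Finsupp.sum, map_sum, Finset.sum_eq_single_of_mem μ hμ]
    · rw [hq, Lagrange.eval_basis_self Function.injective_id.injOn hμ, one_smul]
    · intro ν hν hne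
      rw [hq, Lagrange.eval_basis_of_ne hne.symm hν, zero_smul]
  rw [← interpolation, Polynomial.aeval_endomorphism]
  exact Submodule.sum_mem _ fun k _ =>
    p.smul_mem _ (Module.End.pow_apply_mem_of_forall_mem k hp _ hx)

section Derivations

variable {R A : Type*} [CommRing R] [CommRing A] [Algebra R A]

theorem derivation_sum_apply {ι : Type*} (s : Finset ι) (D : ι → Derivation R A A) (g : A) :
    (∑ i ∈ s, D i) g = ∑ i ∈ s, D i g := by
  rw [← Derivation.coeFnAddMonoidHom_apply, map_sum, Finset.sum_apply]
  rfl

/-- The Lie algebra of derivations preserving `M`. -/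
def stabilizer (M : Submodule R A) : LieSubalgebra R (Derivation R A A) where
  carrier := {D | ∀ g ∈ M, D g ∈ M}
  add_mem' hD hD' g hg := M.add_mem (hD g hg) (hD' g hg)
  zero_mem' _ _ := M.zero_mem
  smul_mem' r _ hD g hg := M.smul_mem r (hD g hg)
  lie_mem' hD hD' g hg := by
    rw [Derivation.commutator_apply]
    exact M.sub_mem (hD _ (hD' g hg)) (hD' _ (hD g hg))

theorem eq_top_of_stabilizer_eq_top {M : Submodule R A} (hM : stabilizer M = ⊤) {g : A}
    (hg : g ∈ M) {D : Derivation R A A} (hD : IsUnit (D g)) : M = ⊤ := by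
  obtain ⟨u, hu⟩ := hD.exists_left_inv
  refine Submodule.eq_top_iff'.mpr fun h => ?_
  have hmem : (h * u) • D ∈ stabilizer M := hM ▸ LieSubalgebra.mem_top _
  simpa [mul_assoc, hu] using hmem g hg

theorem mul_smul_mem_stabilizer {J : Ideal A} {l : A} (hl : l ∈ J) (g : A)
    (D : Derivation R A A) : g • l • D ∈ stabilizer (J.restrictScalars R) :=
  fun _ _ => J.mul_mem_left g (J.mul_mem_right _ hl)

/-- The first integrals of a family `S` of derivations: the elements annihilated by all of `S`. -/
def firstIntegrals (S : Set (Derivation R A A)) : Submodule R A :=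
  ⨅ D ∈ S, LinearMap.ker (D : A →ₗ[R] A)

theorem mem_firstIntegrals {S : Set (Derivation R A A)} {g : A} :
    g ∈ firstIntegrals S ↔ ∀ D ∈ S, D g = 0 := by
  simp [firstIntegrals]

theorem le_stabilizer_firstIntegrals {L : LieSubalgebra R (Derivation R A A)}
    {S : Set (Derivation R A A)} (hS : ∀ D ∈ L, ∀ Y ∈ S, ⁅D, Y⁆ ∈ S) :
    L ≤ stabilizer (firstIntegrals S) := by
  intro D hD g hg
  rw [mem_firstIntegrals] at hg ⊢
  intro Y hY
  simpa [Derivation.commutator_apply, hg Y hY] using hg _ (hS D hD Y hY)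

theorem smul_mem_stabilizer_firstIntegrals {S : Set (Derivation R A A)} {Y : Derivation R A A}
    (hY : Y ∈ S) (g : A) : g • Y ∈ stabilizer (firstIntegrals S) := by
  intro q hq
  rw [Derivation.smul_apply, mem_firstIntegrals.mp hq Y hY, smul_zero]
  exact Submodule.zero_mem _

/-- The largest ideal contained in `J` that is stable under all the derivations of `S`. When `J` is
the ideal of a point, this is the ideal of the functions all of whose iterated derivatives along `S`
vanish at that point. -/
def differentialCore (S : Set (Derivation R A A)) (J : Ideal A) : Ideal A :=
  sSup {K | K ≤ J ∧ ∀ D ∈ S, ∀ g ∈ K, D g ∈ K}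

variable {S : Set (Derivation R A A)} {J : Ideal A}

theorem differentialCore_le : differentialCore S J ≤ J :=
  sSup_le fun _ hK => hK.1

theorem apply_mem_differentialCore {D : Derivation R A A} (hD : D ∈ S) {g : A}
    (hg : g ∈ differentialCore S J) : D g ∈ differentialCore S J := by
  rw [differentialCore, sSup_eq_iSup'] at hg
  refine Submodule.iSup_induction _ (motive := fun g => D g ∈ differentialCore S J) hg
    (fun K g hg => le_sSup K.2 (K.2.2 D hD g hg)) (by simp) fun g h hDg hDh => ?_
  simpa using add_mem hDg hDh

theorem subset_differentialCore {P : Set A} (hPJ : P ⊆ J)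
    (hP : ∀ D ∈ S, ∀ g ∈ P, D g ∈ Ideal.span P) : P ⊆ differentialCore S J := by
  suffices h : Ideal.span P ≤ differentialCore S J from Ideal.subset_span.trans h
  refine le_sSup ⟨Ideal.span_le.mpr hPJ, fun D hD g hg => ?_⟩
  induction hg using Submodule.span_induction with
  | mem g hg => exact hP D hD g hg
  | zero => simp
  | add g h _ _ hDg hDh => simpa using add_mem hDg hDh
  | smul a g hg hDg =>
    rw [smul_eq_mul, Derivation.leibniz]
    exact add_mem (Ideal.mul_mem_left _ a hDg) (Ideal.mul_mem_right _ _ hg)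

theorem le_stabilizer_differentialCore {L : LieSubalgebra R (Derivation R A A)} (hSL : S ⊆ L)
    (hL : ∀ D ∈ L, ∃ D₀ ∈ S, ∀ g, D g - D₀ g ∈ J) :
    L ≤ stabilizer ((differentialCore S J).restrictScalars R) := by
  intro D hD g hg
  let P : Set A := {h | ∃ D ∈ L, ∃ g ∈ differentialCore S J, D g = h} ∪ differentialCore S J
  refine subset_differentialCore (P := P) ?_ ?_ (.inl ⟨D, hD, g, hg, rfl⟩)
  · rintro _ (⟨D, hD, g, hg, rfl⟩ | hg)
    · obtain ⟨D₀, hD₀, h⟩ := hL D hD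
      exact (Submodule.sub_mem_iff_left _ (differentialCore_le
        (apply_mem_differentialCore hD₀ hg))).mp (h g)
    · exact differentialCore_le hg
  · rintro f hf _ (⟨D, hD, g, hg, rfl⟩ | hg)
    · have commute : f (D g) = D (f g) + ⁅f, D⁆ g := by
        rw [Derivation.commutator_apply, add_sub_cancel]
      rw [commute]
      exact add_mem
        (Ideal.subset_span (.inl ⟨D, hD, _, apply_mem_differentialCore hf hg, rfl⟩))
        (Ideal.subset_span (.inl ⟨_, L.lie_mem (hSL hf) hD, g, hg, rfl⟩))
    · exact Ideal.subset_span (.inr (apply_mem_differentialCore hf hg))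

end Derivations

theorem derivation_eq_zero_of_forall_smul_mem {K A : Type*} [Field K] [CommRing A] [IsDomain A]
    [Algebra K A] (hA : ¬ FiniteDimensional K A) (W : Submodule K (Derivation K A A))
    [FiniteDimensional K W] {D : Derivation K A A} (h : ∀ g : A, g • D ∈ W) : D = 0 := by
  by_contra hD
  obtain ⟨q, hq⟩ : ∃ q, D q ≠ 0 := by
    by_contra! hc
    exact hD (Derivation.ext hc)
  let φ : A →ₗ[K] W := ((LinearMap.toSpanSingleton A _ D).restrictScalars K).codRestrict W h
  refine hA (FiniteDimensional.of_injective φ fun a b hab => mul_right_cancel₀ hq ?_)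
  exact DFunLike.congr_fun (congrArg Subtype.val hab) q

variable {𝕜 n}

theorem vect_eq_zero_of_forall_smul_mem (W : Submodule 𝕜 (Vect 𝕜 n)) [FiniteDimensional 𝕜 W]
    {D : Vect 𝕜 n} (h : ∀ g : MvPolynomial (Fin n) 𝕜, g • D ∈ W) : D = 0 := by
  rcases isEmpty_or_nonempty (Fin n) with _ | _
  · exact derivation_ext isEmptyElim
  · refine derivation_eq_zero_of_forall_smul_mem (fun hfin => ?_) W h
    have := Module.Finite.finite_basis (basisMonomials (Fin n) 𝕜)
    exact not_finite (Fin n →₀ ℕ)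

theorem euler_lie_apply_X (D : Vect 𝕜 n) (i : Fin n) :
    ⁅euler 𝕜 n, D⁆ (X i) = euler 𝕜 n (D (X i)) - D (X i) := by
  simp [Derivation.commutator_apply, euler, mkDerivation_X]

theorem euler_lie_smul (g : MvPolynomial (Fin n) 𝕜) (D : Vect 𝕜 n) :
    ⁅euler 𝕜 n, g • D⁆ = euler 𝕜 n g • D + g • ⁅euler 𝕜 n, D⁆ := by
  refine derivation_ext fun i => ?_
  simp only [Derivation.commutator_apply, Derivation.add_apply, Derivation.smul_apply, smul_eq_mul,
    Derivation.leibniz]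
  ring

theorem eq_sum_smul_pderiv (D : Vect 𝕜 n) : D = ∑ i, D (X i) • pderiv i := by
  refine derivation_ext fun j => ?_
  rw [derivation_sum_apply, Finset.sum_eq_single_of_mem j (Finset.mem_univ j)]
  · simp
  · intro i _ hij
    simp [pderiv_X_of_ne hij.symm]

theorem euler_monomial (m : Fin n →₀ ℕ) (r : 𝕜) :
    euler 𝕜 n (monomial m r) = (m.degree : 𝕜) • monomial m r := by
  rw [eq_sum_smul_pderiv (euler 𝕜 n), derivation_sum_apply, Nat.cast_smul_eq_nsmul,
    ← (isHomogeneous_monomial r rfl).sum_X_mul_pderiv]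
  simp [euler, mkDerivation_X]

theorem coeff_euler (g : MvPolynomial (Fin n) 𝕜) (m : Fin n →₀ ℕ) :
    coeff m (euler 𝕜 n g) = (m.degree : 𝕜) * coeff m g := by
  classical
  induction g using MvPolynomial.induction_on' with
  | add p q hp hq => simp [hp, hq, mul_add]
  | monomial s r =>
    rw [euler_monomial, coeff_smul, coeff_monomial, smul_eq_mul]
    split_ifs with h
    · rw [h]
    · simp

theorem euler_eq_zero_iff [CharZero 𝕜] {g : MvPolynomial (Fin n) 𝕜} :
    euler 𝕜 n g = 0 ↔ g = C (constantCoeff g) := by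
  refine ⟨fun hg => ?_, fun hg => hg ▸ derivation_C _ _⟩
  ext m
  rcases eq_or_ne m 0 with rfl | hm
  · simp [constantCoeff_eq]
  · have hcoeff := coeff_euler g m
    rw [hg, coeff_zero, eq_comm, mul_eq_zero, Nat.cast_eq_zero, Finsupp.degree_eq_zero_iff]
      at hcoeff
    rw [hcoeff.resolve_left hm, coeff_C, if_neg hm.symm]

theorem mem_VectP_neg_one_iff [CharZero 𝕜] {D : Vect 𝕜 n} :
    D ∈ VectP 𝕜 n (-1) ↔ ∀ i, D (X i) = C (constantCoeff (D (X i))) := by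
  simp only [← euler_eq_zero_iff]
  rw [VectP, Module.End.mem_eigenspace_iff, LieAlgebra.ad_apply]
  constructor
  · intro hD i
    have h := euler_lie_apply_X D i
    rw [hD] at h
    simpa [eq_comm] using h
  · intro hD
    refine derivation_ext fun i => ?_
    rw [euler_lie_apply_X, hD]
    simp

theorem pderiv_mem_VectP_neg_one (i : Fin n) : pderiv i ∈ VectP 𝕜 n (-1) := by
  rw [VectP, Module.End.mem_eigenspace_iff, LieAlgebra.ad_apply]
  refine derivation_ext fun j => ?_
  classical
  rw [euler_lie_apply_X, pderiv_X, Pi.single_apply]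
  split_ifs with h <;> simp [pderiv_X, h]

theorem iSup_eigenspace_ad_euler :
    ⨆ μ, (LieAlgebra.ad 𝕜 (Vect 𝕜 n) (euler 𝕜 n)).eigenspace μ = ⊤ := by
  refine Submodule.eq_top_iff'.mpr fun D => ?_
  rw [eq_sum_smul_pderiv D]
  refine Submodule.sum_mem _ fun i _ => ?_
  induction D (X i) using MvPolynomial.induction_on' with
  | add p q hp hq => exact add_smul p q (pderiv i : Vect 𝕜 n) ▸ add_mem hp hq
  | monomial m r =>
    refine Submodule.mem_iSup_of_mem ((m.degree : 𝕜) - 1) ?_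
    have hpderiv : ⁅euler 𝕜 n, (pderiv i : Vect 𝕜 n)⁆ = ((-1 : ℤ) : 𝕜) • pderiv i :=
      Module.End.mem_eigenspace_iff.mp (pderiv_mem_VectP_neg_one i)
    rw [Module.End.mem_eigenspace_iff, LieAlgebra.ad_apply, euler_lie_smul, euler_monomial,
      hpderiv, smul_assoc, smul_comm (monomial m r), ← add_smul, Int.cast_neg, Int.cast_one,
      sub_eq_add_neg]

/-- The value at the origin of a vector field, as a vector of `𝕜ⁿ`. -/
noncomputable def valueAtOrigin : Vect 𝕜 n →ₗ[𝕜] Fin n → 𝕜 where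
  toFun D i := constantCoeff (D (X i))
  map_add' D D' := by ext; simp
  map_smul' r D := by ext; simp [smul_eq_C_mul]

theorem valueAtOrigin_apply (D : Vect 𝕜 n) (i : Fin n) :
    valueAtOrigin D i = constantCoeff (D (X i)) := rfl

theorem constantCoeff_apply (D : Vect 𝕜 n) (g : MvPolynomial (Fin n) 𝕜) :
    constantCoeff (D g) = ∑ i, valueAtOrigin D i * constantCoeff (pderiv i g) := by
  conv_lhs => rw [eq_sum_smul_pderiv D, derivation_sum_apply]
  simp [valueAtOrigin_apply]

theorem valueAtOrigin_euler_lie (D : Vect 𝕜 n) :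
    valueAtOrigin ⁅euler 𝕜 n, D⁆ = -valueAtOrigin D := by
  ext i
  have : constantCoeff (euler 𝕜 n (D (X i))) = 0 := by simp [constantCoeff_eq, coeff_euler]
  simp [valueAtOrigin_apply, euler_lie_apply_X, this]

theorem map_valueAtOrigin_inf_VectP_neg_one {W : Submodule 𝕜 (Vect 𝕜 n)}
    (hW : ∀ D ∈ W, ⁅euler 𝕜 n, D⁆ ∈ W) :
    (W ⊓ VectP 𝕜 n (-1)).map valueAtOrigin = W.map valueAtOrigin := by
  refine le_antisymm (Submodule.map_mono inf_le_left) ?_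
  conv_lhs => rw [eq_iSup_inf_eigenspace hW iSup_eigenspace_ad_euler, Submodule.map_iSup]
  refine iSup_le fun μ => ?_
  by_cases hμ : μ = ((-1 : ℤ) : 𝕜)
  · rw [hμ, VectP]
  -- `ad ℰ` acts as `-1` on values at the origin, so fields of any other weight vanish there.
  · rintro _ ⟨D, ⟨_, hD⟩, rfl⟩
    have hvalue : (μ + 1) • valueAtOrigin D = 0 := by
      rw [add_smul, one_smul, ← map_smul, ← Module.End.mem_eigenspace_iff.mp hD,
        LieAlgebra.ad_apply, valueAtOrigin_euler_lie, neg_add_cancel]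
    rw [(smul_eq_zero.mp hvalue).resolve_left (by simpa [eq_neg_iff_add_eq_zero] using hμ)]
    exact Submodule.zero_mem _

theorem apply_eq_C_of_isHomogeneous_one [CharZero 𝕜] {D : Vect 𝕜 n} (hD : D ∈ VectP 𝕜 n (-1))
    {l : MvPolynomial (Fin n) 𝕜} (hl : l.IsHomogeneous 1) : D l = C (constantCoeff (D l)) := by
  rw [← mem_homogeneousSubmodule, homogeneousSubmodule_one_eq_span_X] at hl
  induction hl using Submodule.span_induction with
  | mem _ hX =>
    obtain ⟨i, rfl⟩ := hX
    exact mem_VectP_neg_one_iff.mp hD i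
  | zero => simp
  | add g h _ _ hg hh => rw [map_add, map_add, map_add, ← hg, ← hh]
  | smul r g _ hg => rw [D.map_smul, hg, smul_eq_C_mul, ← C_mul, constantCoeff_C]

theorem valueAtOrigin_injOn_VectP_neg_one [CharZero 𝕜] :
    Set.InjOn (valueAtOrigin (𝕜 := 𝕜) (n := n)) (VectP 𝕜 n (-1)) := by
  intro D hD D' hD' h
  refine derivation_ext fun i => ?_
  rw [mem_VectP_neg_one_iff.mp hD i, mem_VectP_neg_one_iff.mp hD' i]
  exact congrArg C (congrFun h i)

theorem exists_linear_form_separating [CharZero 𝕜] {W : Submodule 𝕜 (Vect 𝕜 n)}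
    (hW : ∀ D ∈ W, ⁅euler 𝕜 n, D⁆ ∈ W) {c : Vect 𝕜 n} (hc : c ∈ VectP 𝕜 n (-1)) (hcW : c ∉ W) :
    ∃ l : MvPolynomial (Fin n) 𝕜, l.IsHomogeneous 1 ∧ (∀ D ∈ W, constantCoeff (D l) = 0) ∧
      IsUnit (c l) := by
  have hvalue : valueAtOrigin c ∉ W.map valueAtOrigin := by
    rw [← map_valueAtOrigin_inf_VectP_neg_one hW]
    rintro ⟨D, ⟨hDW, hD⟩, hDc⟩
    exact hcW (valueAtOrigin_injOn_VectP_neg_one hD hc hDc ▸ hDW)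
  obtain ⟨ψ, hψc, hψW⟩ := Submodule.exists_le_ker_of_notMem hvalue
  let l : MvPolynomial (Fin n) 𝕜 := ∑ i, ψ (Pi.single i 1) • X i
  have hl : l.IsHomogeneous 1 :=
    IsHomogeneous.sum _ _ _ fun i _ => (homogeneousSubmodule _ _ 1).smul_mem _ (isHomogeneous_X 𝕜 i)
  have hψ (D : Vect 𝕜 n) : constantCoeff (D l) = ψ (valueAtOrigin D) := by
    conv_rhs => rw [← (Pi.basisFun 𝕜 (Fin n)).sum_repr (valueAtOrigin D)]
    simp [l, valueAtOrigin_apply, mul_comm]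
  refine ⟨l, hl, fun D hD => ?_, ?_⟩
  · rw [hψ]
    exact hψW (Submodule.mem_map_of_mem hD)
  · rw [apply_eq_C_of_isHomogeneous_one hc hl, hψ]
    exact (IsUnit.mk0 _ hψc).map C

variable (𝕜 n) in
/-- The maximal ideal of the origin, which consists of the polynomials vanishing there. -/
noncomputable def originIdeal : Ideal (MvPolynomial (Fin n) 𝕜) :=
  RingHom.ker constantCoeff

theorem mem_originIdeal {g : MvPolynomial (Fin n) 𝕜} :
    g ∈ originIdeal 𝕜 n ↔ constantCoeff g = 0 :=
  Iff.rfl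

theorem differentialCore_originIdeal_eq_bot [CharZero 𝕜] {S : Set (Vect 𝕜 n)}
    (hS : ∀ i, pderiv i ∈ S) : differentialCore S (originIdeal 𝕜 n) = ⊥ := by
  suffices h : ∀ m : Fin n →₀ ℕ, ∀ g ∈ differentialCore S (originIdeal 𝕜 n), coeff m g = 0 from
    (Submodule.eq_bot_iff _).mpr fun g hg => MvPolynomial.ext _ _ (h · g hg)
  intro m
  induction hd : m.degree generalizing m with
  | zero =>
    rw [Finsupp.degree_eq_zero_iff] at hd
    exact hd ▸ fun g hg => differentialCore_le hg
  | succ d ih =>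
    intro g hg
    have hm : m ≠ 0 := by
      rintro rfl
      simp at hd
    obtain ⟨i, hi⟩ := Finsupp.ne_iff.mp hm
    obtain ⟨m, rfl⟩ : ∃ m', m = m' + Finsupp.single i 1 :=
      ⟨_, (tsub_add_cancel_of_le (by simpa [Nat.one_le_iff_ne_zero] using hi)).symm⟩
    have hcoeff := ih m (by simpa using hd) _ (apply_mem_differentialCore (hS i) hg)
    rw [coeff_pderiv] at hcoeff
    exact (mul_eq_zero.mp hcoeff).resolve_right (by exact_mod_cast Nat.succ_ne_zero (m i))

variable {L : LieSubalgebra 𝕜 (Vect 𝕜 n)}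

variable (L) in
/-- The constant vector fields belonging to `L`. -/
def constantFields : Set (Vect 𝕜 n) :=
  {D | D ∈ L ∧ D ∈ VectP 𝕜 n (-1)}

theorem euler_mem_normalizer (hgraded : IsGradedSubalg 𝕜 n L) : euler 𝕜 n ∈ L.normalizer := by
  suffices h : L.toSubmodule ≤ L.toSubmodule.comap (LieAlgebra.ad 𝕜 _ (euler 𝕜 n)) from
    (L.mem_normalizer_iff _).mpr h
  conv_lhs => rw [hgraded]
  refine iSup₂_le fun p _ D ⟨hDL, hD⟩ => ?_
  rw [Submodule.mem_comap, Module.End.mem_eigenspace_iff.mp hD]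
  exact L.smul_mem _ hDL

theorem mem_of_mem_normalizer [FiniteDimensional 𝕜 L] (hmax : IsMaxSubalg 𝕜 n L)
    {D : Vect 𝕜 n} (hD : D ∈ L.normalizer) : D ∈ L := by
  let L' : LieSubalgebra 𝕜 (Vect 𝕜 n) :=
    { (𝕜 ∙ D ⊔ L.toSubmodule : Submodule 𝕜 (Vect 𝕜 n)) with
      lie_mem' := LieSubalgebra.lie_mem_sup_of_mem_normalizer hD }
  have hDL' : D ∈ L' := Submodule.mem_sup_left (Submodule.mem_span_singleton_self D)
  rcases hmax L' fun x hx => Submodule.mem_sup_right hx with h | h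
  · exact h ▸ hDL'
  · have hfin : FiniteDimensional 𝕜 L.toSubmodule := ‹_›
    have hD0 : D = 0 := vect_eq_zero_of_forall_smul_mem (𝕜 ∙ D ⊔ L.toSubmodule) fun g =>
      show g • D ∈ L' from h ▸ LieSubalgebra.mem_top _
    exact hD0 ▸ L.zero_mem

theorem eq_top_of_le_stabilizer [FiniteDimensional 𝕜 L] (hmax : IsMaxSubalg 𝕜 n L)
    {M : Submodule 𝕜 (MvPolynomial (Fin n) 𝕜)} (hL : L ≤ stabilizer M) {D : Vect 𝕜 n} (hD : D ≠ 0)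
    (hDM : ∀ g : MvPolynomial (Fin n) 𝕜, g • D ∈ stabilizer M) {c : Vect 𝕜 n}
    {l : MvPolynomial (Fin n) 𝕜} (hl : l ∈ M) (hc : IsUnit (c l)) : M = ⊤ := by
  rcases hmax _ hL with h | h
  · exact absurd (vect_eq_zero_of_forall_smul_mem L.toSubmodule (h ▸ hDM)) hD
  · exact eq_top_of_stabilizer_eq_top h hl hc

theorem le_stabilizer_differentialCore_constantFields (heuler : ∀ D ∈ L, ⁅euler 𝕜 n, D⁆ ∈ L) :
    L ≤ stabilizer
      ((differentialCore (constantFields L) (originIdeal 𝕜 n)).restrictScalars 𝕜) := by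
  refine le_stabilizer_differentialCore (fun D hD => hD.1) fun D hD => ?_
  obtain ⟨D₀, hD₀, hvalue⟩ := (map_valueAtOrigin_inf_VectP_neg_one heuler).ge
    (Submodule.mem_map_of_mem hD)
  refine ⟨D₀, hD₀, fun g => ?_⟩
  rw [mem_originIdeal, map_sub, constantCoeff_apply, constantCoeff_apply D₀, hvalue, sub_self]

theorem VectP_neg_one_le [CharZero 𝕜] [FiniteDimensional 𝕜 L] (hmax : IsMaxSubalg 𝕜 n L)
    (heuler : ∀ D ∈ L, ⁅euler 𝕜 n, D⁆ ∈ L) : VectP 𝕜 n (-1) ≤ L.toSubmodule := by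
  intro c hc
  by_contra hcL
  obtain ⟨l, hl, hlL, hcl⟩ := exists_linear_form_separating heuler hc hcL
  let J := differentialCore (constantFields L) (originIdeal 𝕜 n)
  have hlJ : l ∈ J := by
    refine subset_differentialCore (Set.singleton_subset_iff.mpr ?_) ?_ (Set.mem_singleton l)
    · exact hl.coeff_eq_zero (by simp)
    · rintro D ⟨hDL, hD⟩ _ rfl
      rw [apply_eq_C_of_isHomogeneous_one hD hl, hlL D hDL, C_0]
      exact zero_mem _
  have hlc : l • c ≠ 0 := by
    intro h
    have hl0 : l = 0 := hcl.mul_left_eq_zero.mp (DFunLike.congr_fun h l)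
    simp [hl0] at hcl
  have htop : J.restrictScalars 𝕜 = ⊤ :=
    eq_top_of_le_stabilizer hmax (le_stabilizer_differentialCore_constantFields heuler) hlc
      (mul_smul_mem_stabilizer hlJ · c) hlJ hcl
  have hone : 1 ∈ originIdeal 𝕜 n :=
    differentialCore_le (show 1 ∈ J.restrictScalars 𝕜 from htop ▸ Submodule.mem_top)
  simp [mem_originIdeal] at hone

theorem mem_firstIntegrals_of_isHomogeneous_one [CharZero 𝕜] {I : Set (Vect 𝕜 n)}
    (hI : ∀ c ∈ VectP 𝕜 n (-1), ∀ D ∈ I, ⁅c, D⁆ ∈ I) {l : MvPolynomial (Fin n) 𝕜}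
    (hl : l.IsHomogeneous 1) (hlI : ∀ D ∈ I, constantCoeff (D l) = 0) :
    l ∈ firstIntegrals I := by
  have hcore : (fun D : Vect 𝕜 n => D l) '' I ⊆
      differentialCore (VectP 𝕜 n (-1) : Set (Vect 𝕜 n)) (originIdeal 𝕜 n) := by
    refine subset_differentialCore (Set.image_subset_iff.mpr hlI) ?_
    rintro c hc _ ⟨D, hD, rfl⟩
    refine Ideal.subset_span ⟨⁅c, D⁆, hI c hc D hD, ?_⟩
    simp only [Derivation.commutator_apply]
    rw [apply_eq_C_of_isHomogeneous_one hc hl, derivation_C, sub_zero]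
  rw [differentialCore_originIdeal_eq_bot pderiv_mem_VectP_neg_one] at hcore
  exact mem_firstIntegrals.mpr fun D hD => hcore ⟨D, hD, rfl⟩

end PolyVect

open PolyVect in
theorem statement9_general {𝕜 : Type*} [Field 𝕜] [CharZero 𝕜] {n : ℕ}
    (L : LieSubalgebra 𝕜 (Vect 𝕜 n)) [FiniteDimensional 𝕜 L]
    (hgraded : IsGradedSubalg 𝕜 n L) (hmax : IsMaxSubalg 𝕜 n L)
    (I : Submodule 𝕜 (Vect 𝕜 n)) (hI : ∀ D ∈ L, ∀ Y ∈ I, ⁅D, Y⁆ ∈ I) (hI0 : I ≠ ⊥) :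
    VectP 𝕜 n (-1) ≤ I := by
  intro c hc
  by_contra hcI
  have heuler : euler 𝕜 n ∈ L := mem_of_mem_normalizer hmax (euler_mem_normalizer hgraded)
  have hconst : VectP 𝕜 n (-1) ≤ L.toSubmodule :=
    VectP_neg_one_le hmax fun D => L.lie_mem heuler
  obtain ⟨l, hl, hlI, hcl⟩ := exists_linear_form_separating (hI _ heuler) hc hcI
  have hlI : l ∈ firstIntegrals (I : Set (Vect 𝕜 n)) :=
    mem_firstIntegrals_of_isHomogeneous_one (fun f hf => hI f (hconst hf)) hl hlI
  obtain ⟨Y, hY, hY0⟩ := Submodule.exists_mem_ne_zero_of_ne_bot hI0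
  have htop : firstIntegrals (I : Set (Vect 𝕜 n)) = ⊤ :=
    eq_top_of_le_stabilizer hmax (le_stabilizer_firstIntegrals hI) hY0
      (smul_mem_stabilizer_firstIntegrals hY) hlI hcl
  exact hY0 (Derivation.ext fun g => mem_firstIntegrals.mp (htop ▸ Submodule.mem_top) Y hY)

/-- Let `L` be a finite-dimensional graded maximal subalgebra of `Vect_pol(E)`.  Then every
nonzero ideal `I` of `L` contains `Vect₋₁(E)`, i.e. all constant vector fields. -/
theorem statement9 (𝕜 : Type) [RCLike 𝕜] (n : ℕ) (hn : 0 < n)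
    (L : LieSubalgebra 𝕜 (Vect 𝕜 n)) (hfd : FiniteDimensional 𝕜 L)
    (hgraded : IsGradedSubalg 𝕜 n L) (hmax : IsMaxSubalg 𝕜 n L)
    (I : Submodule 𝕜 (Vect 𝕜 n)) (hIL : I ≤ L.toSubmodule)
    (hideal : ∀ x ∈ L, ∀ y ∈ I, ⁅x, y⁆ ∈ I) (hI : I ≠ ⊥) :
    VectP 𝕜 n (-1) ≤ I :=
  statement9_general L hgraded hmax I hideal hI
end
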